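/- Distillability criterion: let d ≥ 3, let ρ be a positive semidefinite matrix on ℂ^d ⊗ ℂ^d with Tr ρ = 1, and let ψ be a unit vector with ρ^{T_B} ψ = λψ for a real λ. Let a_1 ≥ a_2 be the two largest singular values of the d×d matrix M_ψ. If λ < −a_1 a_2 (d−2)/(2d−1), then there exists a nonzero vector φ in ℂ^d ⊗ ℂ^d of Schmidt rank at most 2 such that φ† ρ^{T_B} φ < 0 (i.e. ρ is 1-distillable). -/

import Mathlib

open Matrix BigOperators Kronecker ComplexOrder

/-- The d×d matrix `M_v` associated with a vector `v` on ℂ^d ⊗ ℂ^d, `(M_v)_{ij} = v (i,j)`. -/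
def toMat (d : ℕ) (v : Fin d × Fin d → ℂ) : Matrix (Fin d) (Fin d) ℂ :=
  Matrix.of fun i j => v (i, j)

/-- `ρ` has Schmidt number at most `n`: it is a finite sum of `w wᴴ` with each `w` of
Schmidt rank (i.e. rank of the associated d×d matrix) at most `n`. -/
def SchmidtNumberLE (d : ℕ) (ρ : Matrix (Fin d × Fin d) (Fin d × Fin d) ℂ) (n : ℕ) : Prop :=
  ∃ (k : ℕ) (w : Fin k → (Fin d × Fin d → ℂ)),
    (∀ i, (toMat d (w i)).rank ≤ n) ∧
    ρ = ∑ i, Matrix.vecMulVec (w i) (star (w i))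

/-- The partial transpose on the second factor: `(ρ^{T_B})_{(i,j),(k,l)} = ρ_{(i,l),(k,j)}`. -/
noncomputable def ptB (d : ℕ) (ρ : Matrix (Fin d × Fin d) (Fin d × Fin d) ℂ) :
    Matrix (Fin d × Fin d) (Fin d × Fin d) ℂ :=
  Matrix.of fun p q => ρ (p.1, q.2) (q.1, p.2)

/-- The singular values of a d×d complex matrix (in no particular order):
square roots of the eigenvalues of `MᴴM`. -/
noncomputable def singVals (d : ℕ) (M : Matrix (Fin d) (Fin d) ℂ) : Fin d → ℝ :=
  fun i => Real.sqrt ((Matrix.posSemidef_conjTranspose_mul_self M).1.eigenvalues i)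

/-! Suppose that `W = ρ^{T_B}` is nonnegative on vectors of Schmidt rank at most two. The singular
value decomposition of `M_ψ` and a change of local bases reduce to `M_ψ = diag(a)`; put
`Q = ⟨ψ, W ψ⟩`. Two families of vectors of Schmidt rank two bound `Q` from below.

* Twirling the vector with coefficients `√(a k * a l) * (1 + u k * conj (u l))`, where `‖u k‖ = 1`,
  by diagonal phases keeps `2 * diag(a)` coherent and turns the other components into a classical
  mixture. Averaging over the nontrivial characters `u` of `ℤ/d` yields
  `0 ≤ 2 (d - 1) Q + (d - 2) ∑_{k ≠ l} a k * a l * W (k, l) (k, l)`.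
* The vectors `e_k ⊗ e_k + e_l ⊗ e_l`, weighted by `a k * a l`, yield
  `0 ≤ Q + ∑_k a k * (∑_m a m - 2 * a k) * W (k, k) (k, k)`.

Since `a k * a l ≤ a₁ a₂` for `k ≠ l` and `a k * (∑_m a m - 2 * a k) ≤ (d - 2) a₁ a₂`, the sum of
the two is at most `(2 d - 1) Q + (d - 2) a₁ a₂ Tr W`, which is negative under the assumption on
`λ`. For `d = 2` only the first inequality is used. -/

open Finset

theorem sum_eq_sum_diag_add_sum_offDiag {n M : Type*} [Fintype n] [AddCommMonoid M]
    (f : n × n → M) : ∑ p, f p = ∑ i, f (i, i) + ∑ p ∈ univ.offDiag, f p := by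
  classical
  rw [← univ_product_univ, ← diag_union_offDiag, sum_union (disjoint_diag_offDiag _), sum_diag]

section Rank

variable {m n K : Type*} [Fintype n] [Field K]

theorem matrix_rank_add_le (A B : Matrix m n K) : (A + B).rank ≤ A.rank + B.rank := by
  rw [rank, rank, rank, mulVecLin_add]
  exact (Submodule.finrank_mono (LinearMap.range_add_le _ _)).trans
    (Submodule.finrank_add_le_finrank_add_finrank _ _)

theorem rank_vecMulVec_add_vecMulVec_le (x z : m → K) (y w : n → K) :
    (vecMulVec x y + vecMulVec z w).rank ≤ 2 :=
  (matrix_rank_add_le _ _).trans (add_le_add (rank_vecMulVec_le x y) (rank_vecMulVec_le z w))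

end Rank

section SingularValueDecomposition

variable {𝕜 : Type*} [RCLike 𝕜]

theorem exists_orthonormalBasis_eq_norm_smul {ι E : Type*} [Fintype ι] [NormedAddCommGroup E]
    [InnerProductSpace 𝕜 E] [FiniteDimensional 𝕜 E]
    (hι : Module.finrank 𝕜 E = Fintype.card ι) {f : ι → E}
    (hf : Pairwise fun i j => inner 𝕜 (f i) (f j) = 0) :
    ∃ b : OrthonormalBasis ι 𝕜 E, ∀ i, f i = (‖f i‖ : 𝕜) • b i := by
  have hon : Orthonormal 𝕜
      ({i | f i ≠ 0}.domRestrict fun i => ((‖f i‖⁻¹ : ℝ) : 𝕜) • f i) := by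
    refine ⟨fun i => ?_, fun i j hij => ?_⟩
    · have hi : ‖f i‖ ≠ 0 := norm_ne_zero_iff.mpr i.2
      simp [norm_smul, hi]
    · simp [inner_smul_left, inner_smul_right, hf (Subtype.coe_injective.ne hij)]
  obtain ⟨b, hb⟩ := hon.exists_orthonormalBasis_extension_of_card_eq hι
  refine ⟨b, fun i => ?_⟩
  by_cases hi : f i = 0
  · simp [hi]
  · rw [hb i hi, smul_smul, ← RCLike.ofReal_mul, mul_inv_cancel₀ (norm_ne_zero_iff.mpr hi),
      RCLike.ofReal_one, one_smul]

variable {n : Type*} [Fintype n] [DecidableEq n]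

theorem exists_unitary_mul_diagonal_of_conjTranspose_mul_self {A : Matrix n n 𝕜} {c : n → ℝ}
    (hA : Aᴴ * A = diagonal fun i => (c i : 𝕜)) :
    ∃ U ∈ unitaryGroup n 𝕜, A = U * diagonal fun i => ((√(c i) : ℝ) : 𝕜) := by
  let f : n → EuclideanSpace 𝕜 n := fun i => WithLp.toLp 2 (Aᵀ i)
  have hinner (i j : n) : inner 𝕜 (f i) (f j) = diagonal (fun k => (c k : 𝕜)) i j := by
    rw [← hA]
    exact inner_matrix_col_col A A i j
  have hnorm (i : n) : ‖f i‖ = √(c i) := by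
    rw [@norm_eq_sqrt_re_inner 𝕜, hinner, diagonal_apply_eq, RCLike.ofReal_re]
  obtain ⟨b, hb⟩ := exists_orthonormalBasis_eq_norm_smul (𝕜 := 𝕜) (f := f) finrank_euclideanSpace
    fun i j hij => (hinner i j).trans (diagonal_apply_ne _ hij)
  refine ⟨_, (EuclideanSpace.basisFun n 𝕜).toMatrix_orthonormalBasis_mem_unitary b, ?_⟩
  ext k i
  have hki : A k i = ((‖f i‖ : ℝ) : 𝕜) * b i k := congr($(hb i) k)
  rw [hki, hnorm, mul_diagonal, mul_comm]
  rfl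

theorem exists_unitary_mul_diagonal_mul_unitary (A : Matrix n n 𝕜) :
    ∃ U ∈ unitaryGroup n 𝕜, ∃ V ∈ unitaryGroup n 𝕜,
      A = U * diagonal (fun i =>
        ((√((isHermitian_conjTranspose_mul_self A).eigenvalues i) : ℝ) : 𝕜)) * V := by
  let hH := isHermitian_conjTranspose_mul_self A
  let V : Matrix n n 𝕜 := hH.eigenvectorUnitary
  have hV : V * Vᴴ = 1 := Unitary.mul_star_self_of_mem hH.eigenvectorUnitary.2
  have hdiag : (A * V)ᴴ * (A * V) = diagonal fun i => (hH.eigenvalues i : 𝕜) := by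
    rw [conjTranspose_mul, Matrix.mul_assoc, ← Matrix.mul_assoc Aᴴ, ← Matrix.mul_assoc]
    exact (Unitary.conjStarAlgAut_star_apply _ _).symm.trans
      hH.conjStarAlgAut_star_eigenvectorUnitary
  obtain ⟨U, hU, hAV⟩ := exists_unitary_mul_diagonal_of_conjTranspose_mul_self hdiag
  refine ⟨U, hU, Vᴴ, Unitary.star_mem hH.eigenvectorUnitary.2, ?_⟩
  rw [← hAV, Matrix.mul_assoc, hV, Matrix.mul_one]

end SingularValueDecomposition

section SchmidtForm

variable {m n : Type*} [Fintype m] [Fintype n]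

/-- The quadratic form `Re ⟨v, W v⟩` at the vector `v = vec Xᵀ` of `ℂ^m ⊗ ℂ^n`, that is
`v (i, j) = X i j`. Parametrizing vectors by their coefficient matrices makes the Schmidt rank of
`v` the rank of `X`. -/
noncomputable def schmidtForm (W : Matrix (m × n) (m × n) ℂ) (X : Matrix m n ℂ) : ℝ :=
  (star (vec Xᵀ) ⬝ᵥ W *ᵥ vec Xᵀ).re

/-- `W` is `k`-block-positive: its quadratic form is nonnegative on vectors of Schmidt rank at most
`k`. A state `ρ` fails to be `1`-distillable exactly when `ρ^{T_B}` is `2`-block-positive. -/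
def IsBlockPositive (k : ℕ) (W : Matrix (m × n) (m × n) ℂ) : Prop :=
  ∀ X : Matrix m n ℂ, X.rank ≤ k → 0 ≤ schmidtForm W X

theorem schmidtForm_eq_sum (W : Matrix (m × n) (m × n) ℂ) (X : Matrix m n ℂ) :
    schmidtForm W X = ∑ p, ∑ q, (star (X p.1 p.2) * X q.1 q.2 * W p q).re := by
  simp only [schmidtForm, dotProduct, mulVec, mul_sum, Complex.re_sum]
  refine sum_congr rfl fun p _ => sum_congr rfl fun q _ => congrArg Complex.re ?_
  simp only [Pi.star_apply, vec, transpose_apply]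
  ring

theorem schmidtForm_mul_mul (W : Matrix (m × n) (m × n) ℂ) (A : Matrix m m ℂ) (X : Matrix m n ℂ)
    (B : Matrix n n ℂ) :
    schmidtForm W (A * X * B) = schmidtForm ((A ⊗ₖ Bᵀ)ᴴ * W * (A ⊗ₖ Bᵀ)) X := by
  have hvec : vec (A * X * B)ᵀ = (A ⊗ₖ Bᵀ) *ᵥ vec Xᵀ := by
    rw [kronecker_mulVec_vec, transpose_mul, transpose_mul, Matrix.mul_assoc]
  rw [schmidtForm, schmidtForm, hvec, star_mulVec, ← dotProduct_mulVec, mulVec_mulVec,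
    mulVec_mulVec, Matrix.mul_assoc]

theorem IsBlockPositive.conj_kronecker {k : ℕ} {W : Matrix (m × n) (m × n) ℂ}
    (hW : IsBlockPositive k W) (A : Matrix m m ℂ) (B : Matrix n n ℂ) :
    IsBlockPositive k ((A ⊗ₖ Bᵀ)ᴴ * W * (A ⊗ₖ Bᵀ)) := fun X hX => by
  rw [← schmidtForm_mul_mul]
  exact hW _ ((rank_mul_le_left _ _).trans <| (rank_mul_le_right _ _).trans hX)

theorem IsBlockPositive.re_apply_self_nonneg {k : ℕ} (hk : 1 ≤ k)
    {W : Matrix (m × n) (m × n) ℂ} (hW : IsBlockPositive k W) (p : m × n) : 0 ≤ (W p p).re := by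
  classical
  have hrank : (single p.1 p.2 (1 : ℂ)).rank ≤ k := by
    rw [single_eq_single_vecMulVec_single]
    exact (rank_vecMulVec_le _ _).trans hk
  simpa [schmidtForm, ← Pi.single_star] using hW _ hrank

theorem schmidtForm_diagonal [DecidableEq n] (W : Matrix (n × n) (n × n) ℂ) (x : n → ℂ) :
    schmidtForm W (diagonal x) = ∑ i, ∑ j, (star (x i) * x j * W (i, i) (j, j)).re := by
  simp [schmidtForm_eq_sum, Fintype.sum_prod_type, diagonal_apply, apply_ite star,
    apply_ite Complex.re]

theorem schmidtForm_diagonal_ofReal [DecidableEq n] (W : Matrix (n × n) (n × n) ℂ) (a : n → ℝ) :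
    schmidtForm W (diagonal fun i => (a i : ℂ)) =
      ∑ i, ∑ j, a i * a j * (W (i, i) (j, j)).re := by
  simp [schmidtForm_diagonal]

theorem schmidtForm_diagonal_single_add_single [DecidableEq n] (W : Matrix (n × n) (n × n) ℂ)
    (i j : n) :
    schmidtForm W (diagonal (Pi.single i 1 + Pi.single j 1)) =
      (W (i, i) (i, i)).re + (W (i, i) (j, j)).re +
        ((W (j, j) (i, i)).re + (W (j, j) (j, j)).re) := by
  simp [schmidtForm_diagonal, Pi.single_apply, add_mul, sum_add_distrib, apply_ite star,
    apply_ite Complex.re, ite_add_zero]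

theorem IsBlockPositive.re_apply_pair_nonneg {W : Matrix (n × n) (n × n) ℂ}
    (hW : IsBlockPositive 2 W) (i j : n) :
    0 ≤ (W (i, i) (i, i)).re + (W (j, j) (j, j)).re +
      (W (i, i) (j, j)).re + (W (j, j) (i, i)).re := by
  classical
  have hpair : diagonal (Pi.single i 1 + Pi.single j 1 : n → ℂ) =
      vecMulVec (Pi.single i 1) (Pi.single i 1) + vecMulVec (Pi.single j 1) (Pi.single j 1) := by
    rw [← single_eq_single_vecMulVec_single, ← single_eq_single_vecMulVec_single,
      ← diagonal_single, ← diagonal_single, diagonal_add]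
    rfl
  have h := hW _ (hpair ▸ rank_vecMulVec_add_vecMulVec_le _ _ _ _)
  rw [schmidtForm_diagonal_single_add_single] at h
  linarith

end SchmidtForm

section Twirl

theorem single_sub_single_eq_single_sub_single_iff {n : Type*} [DecidableEq n] (p q : n × n) :
    (Pi.single p.1 1 - Pi.single p.2 1 : n → ZMod 3) = Pi.single q.1 1 - Pi.single q.2 1 ↔
      p = q ∨ p.1 = p.2 ∧ q.1 = q.2 := by
  rw [sub_eq_sub_iff_add_eq_add, Pi.single_add_single_eq_single_add_single one_ne_zero one_ne_zero]
  have h : (1 + 1 : ZMod 3) ≠ 0 := by decide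
  grind

variable {n : Type*} [Fintype n] [DecidableEq n]

/-- The diagonal unitary matrix of phases attached to a character of `(ℤ/3)ⁿ`, used to twirl
coefficient matrices. Cube roots of unity are needed in
`single_sub_single_eq_single_sub_single_iff`, which fails for signs because `-1 = 1` in `ℤ/2`. -/
noncomputable def phaseMatrix (χ : AddChar (n → ZMod 3) ℂ) : Matrix n n ℂ :=
  diagonal fun i => χ (Pi.single i 1)

theorem phaseMatrix_conj_apply (χ : AddChar (n → ZMod 3) ℂ) (X : Matrix n n ℂ) (i j : n) :
    (phaseMatrix χ * X * (phaseMatrix χ)ᴴ) i j =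
      χ (Pi.single i 1 - Pi.single j 1) * X i j := by
  simp only [phaseMatrix, diagonal_conjTranspose, mul_diagonal, diagonal_mul, Pi.star_apply,
    RCLike.star_def, sub_eq_add_neg, AddChar.map_add_eq_mul, AddChar.map_neg_eq_conj]
  ring

theorem expect_schmidtForm_phaseMatrix_conj (W : Matrix (n × n) (n × n) ℂ) (X : Matrix n n ℂ) :
    𝔼 χ, schmidtForm W (phaseMatrix χ * X * (phaseMatrix χ)ᴴ) =
      schmidtForm W (diagonal X.diag) + ∑ p ∈ univ.offDiag, ‖X p.1 p.2‖ ^ 2 * (W p p).re := by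
  let F (p q : n × n) : ℂ := star (X p.1 p.2) * X q.1 q.2 * W p q
  have hF (p q : n × n) : 𝔼 χ : AddChar (n → ZMod 3) ℂ,
      (star ((phaseMatrix χ * X * (phaseMatrix χ)ᴴ) p.1 p.2) *
        (phaseMatrix χ * X * (phaseMatrix χ)ᴴ) q.1 q.2 * W p q).re =
      if q = p ∨ q.1 = q.2 ∧ p.1 = p.2 then (F p q).re else 0 := by
    let v (p : n × n) : n → ZMod 3 := Pi.single p.1 1 - Pi.single p.2 1
    have hχ (χ : AddChar (n → ZMod 3) ℂ) :
        star ((phaseMatrix χ * X * (phaseMatrix χ)ᴴ) p.1 p.2) *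
          (phaseMatrix χ * X * (phaseMatrix χ)ᴴ) q.1 q.2 * W p q = χ (v q - v p) * F p q := by
      rw [phaseMatrix_conj_apply, phaseMatrix_conj_apply, sub_eq_add_neg (v q),
        AddChar.map_add_eq_mul, AddChar.map_neg_eq_conj, star_mul']
      simp only [F, v, RCLike.star_def]
      ring
    simp only [hχ]
    rw [← Complex.re_expect, ← expect_mul, AddChar.expect_apply_eq_ite, ite_mul, one_mul, zero_mul,
      apply_ite Complex.re, Complex.zero_re]
    simp only [sub_eq_zero, v, single_sub_single_eq_single_sub_single_iff]
  simp only [schmidtForm_eq_sum W (_ * _), expect_sum_comm, hF]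
  rw [sum_eq_sum_diag_add_sum_offDiag, schmidtForm_diagonal]
  congr 1
  · refine sum_congr rfl fun i _ => ?_
    have hi (k l : n) : ((k, l) = (i, i) ∨ k = l) ↔ k = l := by grind
    simp only [Fintype.sum_prod_type, and_true, hi, sum_ite_eq, mem_univ, if_true, F, diag_apply]
  · refine sum_congr rfl fun p hp => ?_
    have hq (q : n × n) : (q = p ∨ q.1 = q.2 ∧ p.1 = p.2) ↔ q = p := by
      simp [(mem_offDiag.mp hp).2.2]
    simp only [hq, sum_ite_eq', mem_univ, if_true, F]
    rw [RCLike.star_def, Complex.conj_mul', ← Complex.ofReal_pow, Complex.re_ofReal_mul]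

theorem IsBlockPositive.schmidtForm_diagonal_diag_add_sum_offDiag_nonneg {k : ℕ}
    {W : Matrix (n × n) (n × n) ℂ} (hW : IsBlockPositive k W) {X : Matrix n n ℂ}
    (hX : X.rank ≤ k) :
    0 ≤ schmidtForm W (diagonal X.diag) +
      ∑ p ∈ univ.offDiag, ‖X p.1 p.2‖ ^ 2 * (W p p).re := by
  rw [← expect_schmidtForm_phaseMatrix_conj]
  exact expect_nonneg fun χ _ =>
    hW _ ((rank_mul_le_left _ _).trans <| (rank_mul_le_right _ _).trans hX)

end Twirl

section DiagonalBounds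

theorem norm_one_add_sq_eq {z : ℂ} (hz : ‖z‖ = 1) : ‖1 + z‖ ^ 2 = 2 * (1 + z.re) := by
  rw [norm_add_sq_real, norm_one, hz, Complex.inner, map_one, mul_one]
  ring

theorem sum_erase_zero_one_add_re_addChar {G : Type*} [AddCommGroup G] [Fintype G] {x : G}
    (hx : x ≠ 0) :
    ∑ ψ ∈ univ.erase (0 : AddChar G ℂ), (1 + (ψ x).re) = Fintype.card G - 2 := by
  have hsum : ∑ ψ : AddChar G ℂ, (ψ x).re = 0 := by
    rw [← Complex.re_sum, AddChar.sum_apply_eq_zero_iff_ne_zero.mpr hx, Complex.zero_re]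
  rw [sum_erase_eq_sub (mem_univ _), sum_add_distrib, hsum]
  simp only [sum_const, card_univ, AddChar.card_eq, nsmul_eq_mul, mul_one, add_zero,
    AddChar.zero_apply, Complex.one_re]
  ring

theorem sum_sum_add_sum_diag_nonneg_of_pairs {n : Type*} [Fintype n] {R : n → n → ℝ}
    {a : n → ℝ} (ha : ∀ i, 0 ≤ a i)
    (hR : ∀ i j, i ≠ j → 0 ≤ R i i + R j j + R i j + R j i) :
    0 ≤ ∑ i, ∑ j, a i * a j * R i j + ∑ k, a k * (∑ m, a m - 2 * a k) * R k k := by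
  have hpairs : 0 ≤ ∑ p ∈ univ.offDiag,
      a p.1 * a p.2 * (R p.1 p.1 + R p.2 p.2 + R p.1 p.2 + R p.2 p.1) :=
    sum_nonneg fun p hp =>
      mul_nonneg (mul_nonneg (ha _) (ha _)) (hR _ _ (mem_offDiag.mp hp).2.2)
  have hsplit := sum_eq_sum_diag_add_sum_offDiag fun p : n × n =>
    a p.1 * a p.2 * (R p.1 p.1 + R p.2 p.2 + R p.1 p.2 + R p.2 p.1)
  have hleft : ∑ i, ∑ j, a i * a j * R i i = ∑ k, a k * (∑ m, a m) * R k k :=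
    sum_congr rfl fun i _ => by rw [mul_sum, sum_mul]
  have hright : ∑ i, ∑ j, a i * a j * R j j = ∑ k, a k * (∑ m, a m) * R k k := by
    rw [sum_comm, ← hleft]
    exact sum_congr rfl fun i _ => sum_congr rfl fun j _ => by rw [mul_comm (a j)]
  have hswap : ∑ i, ∑ j, a i * a j * R j i = ∑ i, ∑ j, a i * a j * R i j := by
    rw [sum_comm]
    exact sum_congr rfl fun i _ => sum_congr rfl fun j _ => by rw [mul_comm (a j)]
  have hdiag : ∑ k, a k * (∑ m, a m - 2 * a k) * R k k =
      ∑ k, a k * (∑ m, a m) * R k k - 2 * ∑ k, a k * a k * R k k := by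
    rw [mul_sum, ← sum_sub_distrib]
    exact sum_congr rfl fun k _ => by ring
  have hfour : ∑ i, a i * a i * (R i i + R i i + R i i + R i i) = 4 * ∑ k, a k * a k * R k k := by
    rw [mul_sum]
    exact sum_congr rfl fun k _ => by ring
  simp only [hfour, Fintype.sum_prod_type] at hsplit
  simp only [mul_add, sum_add_distrib, hleft, hright, hswap] at hsplit hpairs
  linarith

variable {n : Type*} [Fintype n] [DecidableEq n] {W : Matrix (n × n) (n × n) ℂ} {a : n → ℝ}

theorem IsBlockPositive.two_mul_schmidtForm_diagonal_add_sum_phases_nonneg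
    (hW : IsBlockPositive 2 W) (ha : ∀ i, 0 ≤ a i) {u : n → ℂ} (hu : ∀ i, ‖u i‖ = 1) :
    0 ≤ 2 * schmidtForm W (diagonal fun i => (a i : ℂ)) +
      ∑ p ∈ univ.offDiag,
        a p.1 * a p.2 * (1 + (u p.1 * star (u p.2)).re) * (W p p).re := by
  let s (i : n) : ℂ := (√(a i) : ℝ)
  let X : Matrix n n ℂ := vecMulVec s s + vecMulVec (s * u) (s * star u)
  have hX (i j : n) : X i j = s i * s j * (1 + u i * star (u j)) := by
    simp only [X, Matrix.add_apply, vecMulVec_apply, Pi.mul_apply, Pi.star_apply]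
    ring
  have hnorm (p : n × n) :
      ‖X p.1 p.2‖ ^ 2 = 2 * (a p.1 * a p.2 * (1 + (u p.1 * star (u p.2)).re)) := by
    have hz : ‖u p.1 * star (u p.2)‖ = 1 := by rw [norm_mul, norm_star, hu, hu, one_mul]
    have hs (i : n) : ‖s i‖ ^ 2 = a i := by
      rw [Complex.norm_real, Real.norm_of_nonneg (Real.sqrt_nonneg _), Real.sq_sqrt (ha i)]
    rw [hX, norm_mul, norm_mul, mul_pow, mul_pow, hs, hs, norm_one_add_sq_eq hz]
    ring
  have hdiag : X.diag = fun i => ((2 * a i : ℝ) : ℂ) := by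
    ext i
    have hs : s i * s i = a i := by rw [← Complex.ofReal_mul, Real.mul_self_sqrt (ha i)]
    have hui : u i * star (u i) = 1 := by rw [RCLike.star_def, Complex.mul_conj', hu]; norm_num
    rw [diag_apply, hX, hs, hui, Complex.ofReal_mul, Complex.ofReal_ofNat]
    ring
  have h := hW.schmidtForm_diagonal_diag_add_sum_offDiag_nonneg (X := X)
    (rank_vecMulVec_add_vecMulVec_le _ _ _ _)
  have hfour : schmidtForm W (diagonal X.diag) =
      4 * schmidtForm W (diagonal fun i => (a i : ℂ)) := by
    simp only [hdiag, schmidtForm_diagonal_ofReal, mul_sum]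
    exact sum_congr rfl fun i _ => sum_congr rfl fun j _ => by ring
  have htwo : ∑ p ∈ univ.offDiag, ‖X p.1 p.2‖ ^ 2 * (W p p).re =
      2 * ∑ p ∈ univ.offDiag, a p.1 * a p.2 * (1 + (u p.1 * star (u p.2)).re) * (W p p).re := by
    rw [mul_sum]
    exact sum_congr rfl fun p _ => by rw [hnorm, mul_assoc 2]
  linarith

theorem IsBlockPositive.card_mul_schmidtForm_diagonal_add_sum_offDiag_nonneg [Nonempty n]
    (hW : IsBlockPositive 2 W) (ha : ∀ i, 0 ≤ a i) :
    0 ≤ 2 * ((Fintype.card n : ℝ) - 1) * schmidtForm W (diagonal fun i => (a i : ℂ)) +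
      ((Fintype.card n : ℝ) - 2) * ∑ p ∈ univ.offDiag, a p.1 * a p.2 * (W p p).re := by
  let e : n ≃ ZMod (Fintype.card n) := Fintype.equivOfCardEq (ZMod.card _).symm
  have hψ (p : n × n) (ψ : AddChar (ZMod (Fintype.card n)) ℂ) :
      ψ (e p.1) * star (ψ (e p.2)) = ψ (e p.1 - e p.2) := by
    rw [sub_eq_add_neg, AddChar.map_add_eq_mul, AddChar.map_neg_eq_conj, RCLike.star_def]
  have hsum := sum_nonneg fun ψ (_ : ψ ∈ univ.erase (0 : AddChar (ZMod (Fintype.card n)) ℂ)) =>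
    hW.two_mul_schmidtForm_diagonal_add_sum_phases_nonneg ha (u := fun i => ψ (e i))
      fun i => ψ.norm_apply _
  have hoff : ∑ ψ ∈ univ.erase (0 : AddChar (ZMod (Fintype.card n)) ℂ), ∑ p ∈ univ.offDiag,
      a p.1 * a p.2 * (1 + (ψ (e p.1) * star (ψ (e p.2))).re) * (W p p).re =
      ((Fintype.card n : ℝ) - 2) * ∑ p ∈ univ.offDiag, a p.1 * a p.2 * (W p p).re := by
    rw [sum_comm, mul_sum]
    refine sum_congr rfl fun p hp => ?_
    have hp : e p.1 - e p.2 ≠ 0 := sub_ne_zero.mpr (e.injective.ne (mem_offDiag.mp hp).2.2)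
    simp only [hψ, ← sum_mul, ← mul_sum, sum_erase_zero_one_add_re_addChar hp, ZMod.card]
    ring
  rw [sum_add_distrib, hoff, sum_const, card_erase_of_mem (mem_univ _), card_univ,
    AddChar.card_eq, ZMod.card, nsmul_eq_mul, Nat.cast_pred Fintype.card_pos] at hsum
  linarith

theorem IsBlockPositive.schmidtForm_diagonal_add_sum_diag_nonneg
    (hW : IsBlockPositive 2 W) (ha : ∀ i, 0 ≤ a i) :
    0 ≤ schmidtForm W (diagonal fun i => (a i : ℂ)) +
      ∑ k, a k * (∑ m, a m - 2 * a k) * (W (k, k) (k, k)).re := by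
  rw [schmidtForm_diagonal_ofReal]
  exact sum_sum_add_sum_diag_nonneg_of_pairs (R := fun i j => (W (i, i) (j, j)).re) ha
    fun i j _ => hW.re_apply_pair_nonneg i j

end DiagonalBounds

section LargestTwo

variable {n : Type*} {a : n → ℝ} {i j : n}

theorem mul_le_mul_of_le_second_largest (ha : ∀ k, 0 ≤ a k) (hji : a j ≤ a i)
    (hmax : ∀ k, k ≠ i → a k ≤ a j) {k l : n} (hkl : k ≠ l) : a k * a l ≤ a i * a j := by
  have hle (m : n) : a m ≤ a i := by
    by_cases hm : m = i
    · rw [hm]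
    · exact (hmax m hm).trans hji
  by_cases hl : l = i
  · rw [hl, mul_comm]
    exact mul_le_mul_of_nonneg_left (hmax k (hl ▸ hkl)) (ha i)
  · exact mul_le_mul (hle k) (hmax l hl) (ha l) (ha i)

theorem mul_sum_sub_two_mul_le_of_le_second_largest [Fintype n]
    (hn : 3 ≤ Fintype.card n) (ha : ∀ k, 0 ≤ a k) (hji : a j ≤ a i)
    (hmax : ∀ k, k ≠ i → a k ≤ a j) (k : n) :
    a k * (∑ m, a m - 2 * a k) ≤ ((Fintype.card n : ℝ) - 2) * (a i * a j) := by
  classical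
  have hprod : a k * (a i + a j - a k) ≤ a i * a j := by
    by_cases hk : k = i
    · rw [hk]
      linarith
    · nlinarith [mul_nonneg (sub_nonneg.mpr ((hmax k hk).trans hji)) (sub_nonneg.mpr (hmax k hk))]
  have hrest : ∑ m, a m - a i - a j - a k ≤ ((Fintype.card n : ℝ) - 3) * a j := by
    have hnonneg : ∀ m ∈ univ.erase i, 0 ≤ a j - a m := fun m hm =>
      sub_nonneg.mpr (hmax m (ne_of_mem_erase hm))
    have hk : a j - a k ≤ ∑ m ∈ univ.erase i, (a j - a m) := by
      by_cases hk : k = i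
      · exact (sub_nonpos.mpr (hk ▸ hji)).trans (sum_nonneg hnonneg)
      · exact single_le_sum hnonneg (mem_erase.mpr ⟨hk, mem_univ k⟩)
    rw [sum_erase_eq_sub (mem_univ i), sum_sub_distrib, sum_const, card_univ, nsmul_eq_mul] at hk
    linarith
  have hle : a k ≤ a i := by
    by_cases hk : k = i
    · rw [hk]
    · exact (hmax k hk).trans hji
  have hn' : (0 : ℝ) ≤ Fintype.card n - 3 := sub_nonneg.mpr (mod_cast hn)
  calc a k * (∑ m, a m - 2 * a k)
      = a k * (a i + a j - a k) + a k * (∑ m, a m - a i - a j - a k) := by ring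
    _ ≤ a i * a j + a i * (((Fintype.card n : ℝ) - 3) * a j) :=
        add_le_add hprod <| (mul_le_mul_of_nonneg_left hrest (ha k)).trans <|
          mul_le_mul_of_nonneg_right hle (mul_nonneg hn' (ha j))
    _ = ((Fintype.card n : ℝ) - 2) * (a i * a j) := by ring

end LargestTwo

section TraceBound

variable {n : Type*} [Fintype n] [DecidableEq n] {W : Matrix (n × n) (n × n) ℂ} {a : n → ℝ}
  {i j : n}

theorem IsBlockPositive.schmidtForm_diagonal_add_trace_nonneg (hW : IsBlockPositive 2 W)
    (hn : 2 ≤ Fintype.card n) (ha : ∀ k, 0 ≤ a k) (hji : a j ≤ a i)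
    (hmax : ∀ k, k ≠ i → a k ≤ a j) :
    0 ≤ (2 * (Fintype.card n : ℝ) - 1) * schmidtForm W (diagonal fun k => (a k : ℂ)) +
      ((Fintype.card n : ℝ) - 2) * (a i * a j) * W.trace.re := by
  have hw (p : n × n) : 0 ≤ (W p p).re := hW.re_apply_self_nonneg one_le_two p
  have : Nonempty n := ⟨i⟩
  have hoff := hW.card_mul_schmidtForm_diagonal_add_sum_offDiag_nonneg ha
  rcases hn.eq_or_lt with hn | hn
  · rw [← hn] at hoff ⊢
    norm_num at hoff ⊢
    linarith
  have hn' : (0 : ℝ) ≤ Fintype.card n - 2 := sub_nonneg.mpr (mod_cast hn.le)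
  have hoff_le : ∑ p ∈ univ.offDiag, a p.1 * a p.2 * (W p p).re ≤
      a i * a j * ∑ p ∈ univ.offDiag, (W p p).re := by
    rw [mul_sum]
    exact sum_le_sum fun p hp => mul_le_mul_of_nonneg_right
      (mul_le_mul_of_le_second_largest ha hji hmax (mem_offDiag.mp hp).2.2) (hw p)
  have hdiag_le : ∑ k, a k * (∑ m, a m - 2 * a k) * (W (k, k) (k, k)).re ≤
      ((Fintype.card n : ℝ) - 2) * (a i * a j) * ∑ k, (W (k, k) (k, k)).re := by
    rw [mul_sum]
    exact sum_le_sum fun k _ => mul_le_mul_of_nonneg_right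
      (mul_sum_sub_two_mul_le_of_le_second_largest hn ha hji hmax k) (hw _)
  have htrace : W.trace.re = ∑ k, (W (k, k) (k, k)).re + ∑ p ∈ univ.offDiag, (W p p).re := by
    rw [trace, Complex.re_sum, sum_eq_sum_diag_add_sum_offDiag]
    rfl
  have hdiag := hW.schmidtForm_diagonal_add_sum_diag_nonneg ha
  have hoff_le' := mul_le_mul_of_nonneg_left hoff_le hn'
  rw [htrace]
  linarith

theorem trace_conjTranspose_mul_mul_of_mem_unitaryGroup {m R : Type*} [Fintype m] [DecidableEq m]
    [CommRing R] [StarRing R] {U : Matrix m m R} (hU : U ∈ unitaryGroup m R) (A : Matrix m m R) :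
    (Uᴴ * A * U).trace = A.trace := by
  rw [trace_mul_cycle, ← star_eq_conjTranspose, mem_unitaryGroup_iff.mp hU, Matrix.one_mul]

theorem IsBlockPositive.schmidtForm_unitary_mul_diagonal_mul_unitary_add_trace_nonneg
    (hW : IsBlockPositive 2 W) (hn : 2 ≤ Fintype.card n) {U V : Matrix n n ℂ}
    (hU : U ∈ unitaryGroup n ℂ) (hV : V ∈ unitaryGroup n ℂ) (ha : ∀ k, 0 ≤ a k) (hji : a j ≤ a i)
    (hmax : ∀ k, k ≠ i → a k ≤ a j) :
    0 ≤ (2 * (Fintype.card n : ℝ) - 1) *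
        schmidtForm W (U * diagonal (fun k => (a k : ℂ)) * V) +
      ((Fintype.card n : ℝ) - 2) * (a i * a j) * W.trace.re := by
  have hUV : U ⊗ₖ Vᵀ ∈ unitaryGroup (n × n) ℂ :=
    kronecker_mem_unitary hU (transpose_mem_unitaryGroup_iff.mpr hV)
  rw [schmidtForm_mul_mul, ← trace_conjTranspose_mul_mul_of_mem_unitaryGroup hUV W]
  exact (hW.conj_kronecker U V).schmidtForm_diagonal_add_trace_nonneg hn ha hji hmax

end TraceBound

section PartialTranspose

theorem trace_ptB (d : ℕ) (ρ : Matrix (Fin d × Fin d) (Fin d × Fin d) ℂ) :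
    (ptB d ρ).trace = ρ.trace :=
  rfl

theorem re_star_dotProduct_mulVec_of_eigenvector {m : Type*} [Fintype m] {W : Matrix m m ℂ}
    {v : m → ℂ} {l : ℝ} (hv : ∑ p, ‖v p‖ ^ 2 = 1) (hW : W *ᵥ v = (l : ℂ) • v) :
    (star v ⬝ᵥ W *ᵥ v).re = l := by
  have hnorm : star v ⬝ᵥ v = 1 := by
    rw [← Complex.ofReal_one, ← hv, Complex.ofReal_sum]
    exact sum_congr rfl fun p _ => by
      rw [Pi.star_apply, RCLike.star_def, Complex.conj_mul', Complex.ofReal_pow]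
  rw [hW, dotProduct_smul, hnorm, smul_eq_mul, mul_one, Complex.ofReal_re]

theorem exists_ne_zero_rank_le_re_neg_of_not_isBlockPositive {k d : ℕ}
    {W : Matrix (Fin d × Fin d) (Fin d × Fin d) ℂ} (hW : ¬IsBlockPositive k W) :
    ∃ φ : Fin d × Fin d → ℂ, φ ≠ 0 ∧ (toMat d φ).rank ≤ k ∧ (star φ ⬝ᵥ W *ᵥ φ).re < 0 := by
  simp only [IsBlockPositive, not_forall, not_le] at hW
  obtain ⟨X, hX, hneg⟩ := hW
  refine ⟨vec Xᵀ, fun h0 => hneg.ne ?_, hX, hneg⟩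
  rw [schmidtForm, h0, mulVec_zero, dotProduct_zero, Complex.zero_re]

theorem distillability_criterion_general (d : ℕ)
    (ρ : Matrix (Fin d × Fin d) (Fin d × Fin d) ℂ) (ψ : Fin d × Fin d → ℂ)
    (i j : Fin d) (hij : i ≠ j)
    (hji : singVals d (toMat d ψ) j ≤ singVals d (toMat d ψ) i)
    (hmax : ∀ k, k ≠ i → k ≠ j → singVals d (toMat d ψ) k ≤ singVals d (toMat d ψ) j)
    (hψ : (star ψ ⬝ᵥ (ptB d ρ).mulVec ψ).re <
      -(singVals d (toMat d ψ) i * singVals d (toMat d ψ) j * ((d : ℝ) - 2) /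
        (2 * (d : ℝ) - 1)) * ρ.trace.re) :
    ∃ φ : Fin d × Fin d → ℂ, φ ≠ 0 ∧ (toMat d φ).rank ≤ 2 ∧
      (star φ ⬝ᵥ (ptB d ρ).mulVec φ).re < 0 := by
  have hcard : 2 ≤ Fintype.card (Fin d) := Fintype.one_lt_card_iff.mpr ⟨i, j, hij⟩
  refine exists_ne_zero_rank_le_re_neg_of_not_isBlockPositive fun hblock => ?_
  obtain ⟨U, hU, V, hV, hUV⟩ := exists_unitary_mul_diagonal_mul_unitary (toMat d ψ)
  have hbound := hblock.schmidtForm_unitary_mul_diagonal_mul_unitary_add_trace_nonneg hcard hU hV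
    (a := singVals d (toMat d ψ)) (fun k => Real.sqrt_nonneg _) hji fun k hki =>
      (eq_or_ne k j).elim (fun hkj => hkj ▸ le_rfl) (hmax k hki)
  have hform : schmidtForm (ptB d ρ) (U * diagonal (fun k => (singVals d (toMat d ψ) k : ℂ)) * V) =
      (star ψ ⬝ᵥ (ptB d ρ).mulVec ψ).re :=
    congrArg (schmidtForm (ptB d ρ)) hUV.symm
  rw [hform, trace_ptB, Fintype.card_fin] at hbound
  have hd : (0 : ℝ) < 2 * d - 1 := by
    have hd2 : (2 : ℝ) ≤ d := by exact_mod_cast Fintype.card_fin d ▸ hcard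
    linarith
  rw [← neg_div, div_mul_eq_mul_div, lt_div_iff₀ hd] at hψ
  linarith

end PartialTranspose

/-- Distillability criterion: if `ρ^{T_B}` has an eigenvector `ψ` with eigenvalue
`λ < -a₁a₂(d-2)/(2d-1)`, where `a₁ ≥ a₂` are the two largest singular values of `M_ψ`,
then `ρ` is 1-distillable. -/
theorem distillability_criterion (d : ℕ) (hd : 3 ≤ d)
    (ρ : Matrix (Fin d × Fin d) (Fin d × Fin d) ℂ) (hρ : ρ.PosSemidef) (htr : ρ.trace = 1)
    (ψ : Fin d × Fin d → ℂ) (hψ : ∑ p, ‖ψ p‖ ^ 2 = 1)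
    (l : ℝ) (heig : (ptB d ρ).mulVec ψ = ((l : ℝ) : ℂ) • ψ)
    (i j : Fin d) (hij : i ≠ j) (a₁ a₂ : ℝ)
    (ha₁ : a₁ = singVals d (toMat d ψ) i) (ha₂ : a₂ = singVals d (toMat d ψ) j)
    (h21 : a₂ ≤ a₁) (hmax : ∀ k, k ≠ i → k ≠ j → singVals d (toMat d ψ) k ≤ a₂)
    (hl : l < -(a₁ * a₂ * ((d : ℝ) - 2) / (2 * (d : ℝ) - 1))) :
    ∃ φ : Fin d × Fin d → ℂ, φ ≠ 0 ∧ (toMat d φ).rank ≤ 2 ∧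
      (star φ ⬝ᵥ (ptB d ρ).mulVec φ).re < 0 := by
  subst ha₁ ha₂
  refine distillability_criterion_general d ρ ψ i j hij h21 hmax ?_
  rwa [re_star_dotProduct_mulVec_of_eigenvector hψ heig, htr, Complex.one_re, mul_one]
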